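/- Let d = 1, A = 1, ε ∈ [0,1) and b(x,μ) = −x + εB(μ), where B(μ) = ∫x μ(dx). Let γ₀ denote the standard Gaussian measure on ℝ (a stationary solution of the corresponding nonlinear stationary equation). Let ν be a Borel probability measure on ℝ with ∫x² dν < ∞, and let (μ_t)_{t≥0} be a solution of the Cauchy problem ∂_tμ_t = L_{μ_t}^*μ_t with μ_0 = ν such that sup_{t∈[0,T]}∫x² dμ_t < ∞ for each T > 0 and such that the defining integral identity holds for every φ ∈ C²(ℝ) with sup_x (|φ(x)| + |φ'(x)| + |φ''(x)|)/(1+x²) < ∞. Then there exist α₁, α₂ > 0 such that the total variation norm of the measure (1+x²)^{1/2}·(μ_t − γ₀) is at most α₁ e^{−α₂ t} for all t ≥ 0. -/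

import Mathlib

open MeasureTheory Real Set Filter ProbabilityTheory
open scoped Topology NNReal ENNReal

noncomputable section

/-- The one-dimensional Kolmogorov operator `L φ = φ'' + b φ'`. -/
def L1op (bb : ℝ → ℝ) (φ : ℝ → ℝ) (x : ℝ) : ℝ :=
  deriv (deriv φ) x + bb x * deriv φ x

/-- The mean `B(μ) = ∫ x μ(dx)`. -/
def Bmean (μ : Measure ℝ) : ℝ := ∫ x, x ∂μ

/-- Weighted total-variation distance `‖W·(μ - ν)‖_{TV}` expressed by duality. -/
def wDist1 (W : ℝ → ℝ) (μ ν : Measure ℝ) : ℝ :=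
  ⨆ f : {f : ℝ → ℝ // Measurable f ∧ ∀ x, |f x| ≤ W x},
    (∫ x, f.1 x ∂μ - ∫ x, f.1 x ∂ν)

/-- Cameron–Martin formula for the standard Gaussian measure. -/
lemma integral_gaussianReal_translate (f : ℝ → ℝ) (w : ℝ) :
    ∫ y, f (w + y) ∂(gaussianReal 0 1)
      = ∫ y, f y * Real.exp (w * y - w ^ 2 / 2) ∂(gaussianReal 0 1) := by
  rw [integral_gaussianReal_eq_integral_smul one_ne_zero,
    integral_gaussianReal_eq_integral_smul one_ne_zero,
    ← integral_sub_right_eq_self (μ := volume) _ w]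
  refine integral_congr_ae (Eventually.of_forall fun y => ?_)
  have h : Real.exp (-(y - w) ^ 2 / 2)
      = Real.exp (-y ^ 2 / 2) * Real.exp (w * y - w ^ 2 / 2) := by
    rw [← Real.exp_add]; ring_nf
  simp only [gaussianPDFReal, smul_eq_mul, sub_zero, NNReal.coe_one, mul_one, h,
    add_sub_cancel]
  ring

lemma abs_exp_sub_one_le_mul_exp_abs (u : ℝ) : |Real.exp u - 1| ≤ |u| * Real.exp |u| := by
  have h1 := Real.add_one_le_exp u
  have h2 : 1 - u ≤ Real.exp (-u) := by linarith [Real.add_one_le_exp (-u)]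
  have h3 : Real.exp u * Real.exp (-u) = 1 := by rw [← Real.exp_add]; simp
  have h4 := Real.exp_pos u
  rcases le_total 0 u with hu | hu
  · rw [abs_of_nonneg hu, abs_of_nonneg (by linarith)]
    nlinarith
  · rw [abs_of_nonpos hu, abs_of_nonpos (by linarith [Real.exp_le_one_iff.2 hu])]
    have : 1 ≤ Real.exp (-u) := Real.one_le_exp (by linarith)
    nlinarith

lemma integrable_exp_mul_abs_gaussianReal (k : ℝ) :
    Integrable (fun y => Real.exp (k * |y|)) (gaussianReal 0 1) := by
  refine ((integrable_exp_mul_gaussianReal (μ := 0) (v := 1) k).add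
    (integrable_exp_mul_gaussianReal (μ := 0) (v := 1) (-k))).mono'
    (by fun_prop) (Eventually.of_forall fun y => ?_)
  rw [Real.norm_of_nonneg (Real.exp_pos _).le]
  simp only [Pi.add_apply]
  rcases le_total 0 y with hy | hy
  · rw [abs_of_nonneg hy]; linarith [Real.exp_pos (-k * y)]
  · rw [abs_of_nonpos hy, mul_neg, ← neg_mul]; linarith [Real.exp_pos (k * y)]

/-- Functions of linear growth become locally Lipschitz at the origin after convolution with the
standard Gaussian measure. -/
lemma exists_abs_integral_gaussianReal_translate_sub_le :
    ∃ C > (0 : ℝ), ∀ f : ℝ → ℝ, Measurable f → (∀ u, |f u| ≤ 1 + |u|) → ∀ w : ℝ,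
      |∫ y, f (w + y) ∂(gaussianReal 0 1) - ∫ y, f y ∂(gaussianReal 0 1)|
        ≤ C * (|w| * (1 + |w|)) := by
  set γ := gaussianReal 0 1
  have hi2 := (integrable_exp_mul_abs_gaussianReal 3).const_mul (Real.exp 1)
  have hi1 := integrable_exp_mul_abs_gaussianReal 1
  set C₁ := ∫ y, Real.exp 1 * Real.exp (3 * |y|) ∂γ with hC₁
  set C₂ := ∫ y, Real.exp (1 * |y|) ∂γ with hC₂
  have hC₁0 : 0 ≤ C₁ := integral_nonneg fun y => by positivity
  have hC₂0 : 0 ≤ C₂ := integral_nonneg fun y => by positivity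
  have hlin : ∀ y : ℝ, 1 + |y| ≤ Real.exp |y| := fun y => by
    linarith [Real.add_one_le_exp |y|]
  refine ⟨C₁ + 2 * C₂ + 1, by positivity, fun f hf hfb w => ?_⟩
  have hfi : Integrable f γ := hi1.mono' hf.aestronglyMeasurable
    (Eventually.of_forall fun y => by
      rw [Real.norm_eq_abs, one_mul]; exact (hfb y).trans (hlin y))
  rcases le_total |w| 1 with hw | hw
  · have hpt : ∀ y, |f y * Real.exp (w * y - w ^ 2 / 2) - f y|
        ≤ |w| * (Real.exp 1 * Real.exp (3 * |y|)) := fun y => by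
      have hu : |w * y - w ^ 2 / 2| ≤ |w| * (1 + |y|) := by
        calc |w * y - w ^ 2 / 2| ≤ |w * y| + |w ^ 2 / 2| := abs_sub _ _
          _ = |w| * (|w| / 2 + |y|) := by
            rw [abs_mul, abs_div, abs_pow, abs_two]; ring
          _ ≤ _ := by gcongr; linarith
      have hu' : |w * y - w ^ 2 / 2| ≤ 1 + |y| :=
        hu.trans (mul_le_of_le_one_left (by positivity) hw)
      calc |f y * Real.exp (w * y - w ^ 2 / 2) - f y|
          = |f y| * |Real.exp (w * y - w ^ 2 / 2) - 1| := by rw [← abs_mul]; ring_nf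
        _ ≤ (1 + |y|) * ((|w| * (1 + |y|)) * Real.exp (1 + |y|)) := by
          refine mul_le_mul (hfb y) ?_ (abs_nonneg _) (by positivity)
          refine (abs_exp_sub_one_le_mul_exp_abs _).trans ?_
          gcongr
        _ ≤ Real.exp |y| * ((|w| * Real.exp |y|) * Real.exp (1 + |y|)) := by
          gcongr <;> exact hlin y
        _ = |w| * (Real.exp 1 * Real.exp (3 * |y|)) := by
          rw [Real.exp_add, show (3 : ℝ) * |y| = |y| + |y| + |y| by ring, Real.exp_add,
            Real.exp_add]
          ring
    have hd : Integrable (fun y => f y * Real.exp (w * y - w ^ 2 / 2) - f y) γ :=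
      (hi2.const_mul |w|).mono' (by fun_prop) (Eventually.of_forall hpt)
    have hfe : Integrable (fun y => f y * Real.exp (w * y - w ^ 2 / 2)) γ := by
      refine (hd.add hfi).congr (Eventually.of_forall fun y => ?_)
      simp
    rw [integral_gaussianReal_translate, ← integral_sub hfe hfi, ← Real.norm_eq_abs]
    calc _ ≤ ∫ y, |w| * (Real.exp 1 * Real.exp (3 * |y|)) ∂γ :=
          norm_integral_le_of_norm_le (hi2.const_mul |w|) (Eventually.of_forall hpt)
      _ = C₁ * (|w| * 1) := by rw [integral_const_mul]; ring
      _ ≤ _ := by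
        gcongr
        · linarith
        · linarith [abs_nonneg w]
  · have h1 : |∫ y, f (w + y) ∂γ| ≤ (1 + |w|) * C₂ := by
      rw [← Real.norm_eq_abs, hC₂, ← integral_const_mul]
      refine norm_integral_le_of_norm_le (hi1.const_mul _) (Eventually.of_forall fun y => ?_)
      have := hlin y
      rw [Real.norm_eq_abs, one_mul]
      calc |f (w + y)| ≤ 1 + |w + y| := hfb _
        _ ≤ (1 + |w|) * (1 + |y|) := by
          nlinarith [abs_add_le w y, abs_nonneg w, abs_nonneg y,
            mul_nonneg (abs_nonneg w) (abs_nonneg y)]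
        _ ≤ _ := by gcongr
    have h2 : |∫ y, f y ∂γ| ≤ C₂ := by
      rw [← Real.norm_eq_abs]
      refine norm_integral_le_of_norm_le hi1 (Eventually.of_forall fun y => ?_)
      rw [Real.norm_eq_abs, one_mul]; exact (hfb y).trans (hlin y)
    have h3 : 1 + |w| ≤ |w| * (1 + |w|) := by nlinarith
    have h4 : C₂ * (1 + |w|) ≤ C₂ * (|w| * (1 + |w|)) := by gcongr
    have h5 : 0 ≤ C₁ * (|w| * (1 + |w|)) := by positivity
    have h6 : 0 ≤ C₂ * |w| := by positivity
    have h7 : 0 ≤ |w| * (1 + |w|) := by positivity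
    refine (abs_sub _ _).trans ?_
    nlinarith

/-- Comparison of a Gaussian mixture with the centred Gaussian of the same variance. -/
lemma exists_abs_integral_conv_gaussianReal_sub_le :
    ∃ C > (0 : ℝ), ∀ (P : Measure ℝ) [IsProbabilityMeasure P],
      Integrable (fun x => x ^ 2) P → ∀ (a c r : ℝ) (v : ℝ≥0), 1 / 4 ≤ (v : ℝ) → (v : ℝ) ≤ 1 →
      r ≤ 1 → |a| ≤ r → |c| ≤ r → ∀ f : ℝ → ℝ, Measurable f → (∀ u, |f u| ≤ 1 + |u|) →
      Integrable f ((P.map (fun x => a * x + c)) ∗ gaussianReal 0 v) →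
      |∫ y, f y ∂((P.map (fun x => a * x + c)) ∗ gaussianReal 0 v)
          - ∫ y, f (√v * y) ∂(gaussianReal 0 1)| ≤ C * (1 + ∫ x, x ^ 2 ∂P) * r := by
  obtain ⟨C, hC, hCf⟩ := exists_abs_integral_gaussianReal_translate_sub_le
  refine ⟨C * 24, by positivity, fun P _ hP a c r v hv hv1 hr1 ha hc f hf hfb hfi => ?_⟩
  set σ := √(v : ℝ) with hσ
  have hσ1 : σ ≤ 1 := Real.sqrt_le_one.2 hv1
  have hσ2 : 1 / 2 ≤ σ := Real.le_sqrt_of_sq_le (by linarith)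
  have hσ0 : 0 < σ := by linarith
  have hr0 : 0 ≤ r := (abs_nonneg a).trans ha
  have hγ : gaussianReal 0 v = (gaussianReal 0 1).map (fun y => σ * y) := by
    rw [gaussianReal_map_const_mul]
    congr 1
    · simp
    · ext; simp [hσ]
  have hrep : ∫ y, f y ∂((P.map (fun x => a * x + c)) ∗ gaussianReal 0 v)
      = ∫ x, ∫ y, f (σ * ((a * x + c) / σ + y)) ∂(gaussianReal 0 1) ∂P := by
    rw [integral_conv hfi, integral_map (by fun_prop)]
    · refine integral_congr_ae (Eventually.of_forall fun x => ?_)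
      simp only
      have hfx : Measurable fun y => f (a * x + c + y) := hf.comp (measurable_const_add _)
      rw [hγ, integral_map (by fun_prop) hfx.aestronglyMeasurable]
      congr 1; ext y; congr 1; field_simp
    · refine StronglyMeasurable.aestronglyMeasurable ?_
      exact StronglyMeasurable.integral_prod_right (f := fun x y => f (x + y))
        (hf.comp (measurable_fst.add measurable_snd)).stronglyMeasurable
  have hgb : ∀ u, |f (σ * u)| ≤ 1 + |u| := fun u => by
    refine (hfb _).trans ?_
    rw [abs_mul, abs_of_pos hσ0]
    nlinarith [abs_nonneg u]
  have hpt : ∀ x, |∫ y, f (σ * ((a * x + c) / σ + y)) ∂(gaussianReal 0 1)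
      - ∫ y, f (σ * y) ∂(gaussianReal 0 1)| ≤ C * 24 * r * (1 + x ^ 2) := fun x => by
    refine (hCf (fun u => f (σ * u)) (by fun_prop) hgb ((a * x + c) / σ)).trans ?_
    set z := |(a * x + c) / σ| with hz
    have hz0 : 0 ≤ z := abs_nonneg _
    have hz1 : z ≤ 2 * (r * (1 + |x|)) := by
      rw [hz, abs_div, abs_of_pos hσ0, div_le_iff₀ hσ0]
      have h1 : |a * x + c| ≤ r * (1 + |x|) := by
        calc |a * x + c| ≤ |a| * |x| + |c| := by rw [← abs_mul]; exact abs_add_le _ _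
          _ ≤ r * |x| + r := by gcongr
          _ = _ := by ring
      have h2 : 0 ≤ r * (1 + |x|) := by positivity
      nlinarith
    have h3 : r * (1 + |x|) ≤ 1 + |x| := mul_le_of_le_one_left (by positivity) hr1
    have h4 : z * (1 + z) ≤ (2 * (r * (1 + |x|))) * (1 + 2 * (1 + |x|)) := by
      gcongr
      linarith
    have h5 : (1 + |x|) * (1 + 2 * (1 + |x|)) ≤ 12 * (1 + x ^ 2) := by
      have := sq_abs x
      nlinarith [sq_nonneg (|x| - 1), abs_nonneg x]
    calc C * (z * (1 + z)) ≤ C * ((2 * (r * (1 + |x|))) * (1 + 2 * (1 + |x|))) := by gcongr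
      _ = C * (2 * r * ((1 + |x|) * (1 + 2 * (1 + |x|)))) := by ring
      _ ≤ C * (2 * r * (12 * (1 + x ^ 2))) := by gcongr
      _ = _ := by ring
  have hdom : Integrable (fun x => C * 24 * r * (1 + x ^ 2)) P :=
    ((integrable_const 1).add hP).const_mul _
  have hmeas : StronglyMeasurable
      (fun x => ∫ y, f (σ * ((a * x + c) / σ + y)) ∂(gaussianReal 0 1)) :=
    StronglyMeasurable.integral_prod_right (f := fun x y => f (σ * ((a * x + c) / σ + y)))
      (hf.comp (by fun_prop)).stronglyMeasurable
  have hintegrable : Integrable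
      (fun x => ∫ y, f (σ * ((a * x + c) / σ + y)) ∂(gaussianReal 0 1)) P := by
    have h := (hdom.mono' (hmeas.aestronglyMeasurable.sub aestronglyMeasurable_const)
      (Eventually.of_forall hpt)).add
      (integrable_const (∫ y, f (σ * y) ∂(gaussianReal 0 1)))
    refine h.congr (Eventually.of_forall fun x => ?_)
    simp
  have hc1 : ∫ y, f (σ * y) ∂(gaussianReal 0 1)
      = ∫ _, (∫ y, f (σ * y) ∂(gaussianReal 0 1)) ∂P := by simp
  rw [hrep, hc1, ← integral_sub hintegrable (integrable_const _), ← Real.norm_eq_abs]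
  refine (norm_integral_le_of_norm_le hdom (Eventually.of_forall hpt)).trans_eq ?_
  rw [integral_const_mul, integral_add (integrable_const _) hP]
  simp
  ring

/-- A function that differs from a constant by an integral over `[0, t]` is measurable, whether or
not the integrand is integrable. -/
lemma aestronglyMeasurable_of_eq_primitive {G h : ℝ → ℝ}
    (H : ∀ t, 0 ≤ t → G t - G 0 = ∫ s in (0 : ℝ)..t, h s) (T : ℝ) :
    AEStronglyMeasurable G (volume.restrict (Ioc 0 T)) := by
  set I : Set ℝ := {t | 0 ≤ t ∧ IntegrableOn h (Icc 0 t)} with hI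
  have hIoc : I.OrdConnected := by
    refine ⟨fun x hx y hy z hz => ⟨hx.1.trans hz.1, hy.2.mono_set (Icc_subset_Icc_right hz.2)⟩⟩
  have hcont : ContinuousOn G I := by
    intro t ht
    obtain ⟨t', ht', hn⟩ : ∃ t' ∈ I, Icc 0 t' ∈ 𝓝[I] t := by
      by_cases hmax : ∃ t' ∈ I, t < t'
      · obtain ⟨t', ht', htt'⟩ := hmax
        refine ⟨t', ht', ?_⟩
        filter_upwards [self_mem_nhdsWithin, mem_nhdsWithin_of_mem_nhds (Iic_mem_nhds htt')]
          with x hx hx' using ⟨hx.1, hx'⟩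
      · push Not at hmax
        refine ⟨t, ht, ?_⟩
        filter_upwards [self_mem_nhdsWithin] with x hx using ⟨hx.1, hmax x hx⟩
    have hc : ContinuousOn G (Icc 0 t') := by
      have h1 := intervalIntegral.continuousOn_primitive_interval (f := h) (μ := volume)
        (a := 0) (b := t') (by rw [uIcc_of_le ht'.1]; exact ht'.2)
      rw [uIcc_of_le ht'.1] at h1
      refine (h1.add (continuousOn_const (c := G 0))).congr fun x hx => ?_
      simp only [Pi.add_apply]
      linarith [H x hx.1]
    have htm : t ∈ Icc 0 t' := mem_of_mem_nhdsWithin ht hn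
    exact (hc t htm).mono_of_mem_nhdsWithin hn
  have h1 : AEStronglyMeasurable G (volume.restrict I) :=
    hcont.aestronglyMeasurable hIoc.measurableSet
  have h2 : AEStronglyMeasurable G (volume.restrict (Ioi 0 \ I)) := by
    refine (aestronglyMeasurable_const (b := G 0)).congr ?_
    refine (ae_restrict_iff' (measurableSet_Ioi.diff hIoc.measurableSet)).2
      (Eventually.of_forall fun t ht => ?_)
    have ht0 : (0 : ℝ) ≤ t := ht.1.le
    have hn : ¬ IntervalIntegrable h volume 0 t := fun hi =>
      ht.2 ⟨ht0, (intervalIntegrable_iff_integrableOn_Icc_of_le ht0).1 hi⟩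
    have := H t ht0
    rw [intervalIntegral.integral_undef hn] at this
    linarith
  refine (aestronglyMeasurable_union_iff.2 ⟨h1, h2⟩).mono_set fun t ht => ?_
  by_cases hti : t ∈ I
  · exact Or.inl hti
  · exact Or.inr ⟨ht.1, hti⟩

lemma continuousOn_of_eq_primitive {G h : ℝ → ℝ}
    (H : ∀ t, 0 ≤ t → G t - G 0 = ∫ s in (0 : ℝ)..t, h s)
    (hm : ∀ T, AEStronglyMeasurable h (volume.restrict (Ioc 0 T)))
    (hb : ∀ T, ∃ K, ∀ s ∈ Icc 0 T, |h s| ≤ K) : ContinuousOn G (Ici 0) := by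
  intro t ht
  have ht0 : (0 : ℝ) ≤ t + 1 := by linarith [mem_Ici.1 ht]
  obtain ⟨K, hK⟩ := hb (t + 1)
  have hi : IntegrableOn h (Icc 0 (t + 1)) := by
    rw [integrableOn_Icc_iff_integrableOn_Ioc]
    exact Integrable.of_bound (hm _) K
      ((ae_restrict_iff' measurableSet_Ioc).2
        (Eventually.of_forall fun s hs => hK s (Ioc_subset_Icc_self hs)))
  have h1 := intervalIntegral.continuousOn_primitive_interval (f := h) (μ := volume)
    (a := 0) (b := t + 1) (by rw [uIcc_of_le ht0]; exact hi)
  rw [uIcc_of_le ht0] at h1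
  have hc : ContinuousOn G (Icc 0 (t + 1)) := by
    refine (h1.add (continuousOn_const (c := G 0))).congr fun x hx => ?_
    simp only [Pi.add_apply]
    linarith [H x hx.1]
  refine (hc t ⟨ht, by linarith⟩).mono_of_mem_nhdsWithin ?_
  filter_upwards [self_mem_nhdsWithin,
    mem_nhdsWithin_of_mem_nhds (Iic_mem_nhds (lt_add_one t))] with x hx hx' using ⟨hx, hx'⟩

lemma hasDerivWithinAt_of_eq_primitive {G h : ℝ → ℝ}
    (H : ∀ t, 0 ≤ t → G t - G 0 = ∫ s in (0 : ℝ)..t, h s)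
    (hc : ContinuousOn h (Ici 0)) {t : ℝ} (ht : 0 ≤ t) :
    HasDerivWithinAt G (h t) (Ici 0) t := by
  have hc' : Continuous fun s => h (max 0 s) :=
    hc.comp_continuous (by fun_prop) fun s => le_max_left 0 s
  have H' : ∀ t, 0 ≤ t → G t = (∫ s in (0 : ℝ)..t, h (max 0 s)) + G 0 := fun t ht => by
    rw [← sub_eq_iff_eq_add, H t ht]
    refine intervalIntegral.integral_congr fun s hs => ?_
    rw [uIcc_of_le ht] at hs
    simp only [max_eq_right hs.1]
  have h1 := ((hc'.integral_hasStrictDerivAt 0 t).hasDerivAt.add_const (G 0)).hasDerivWithinAt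
    (s := Ici 0)
  rw [max_eq_right ht] at h1
  exact h1.congr H' (H' t ht)

/-- A solution of the mean-field Ornstein–Uhlenbeck Cauchy problem with locally bounded second
moments. -/
structure IsOUSolution (ε : ℝ) (μt : ℝ → Measure ℝ) : Prop where
  prob : ∀ t, 0 ≤ t → IsProbabilityMeasure (μt t)
  int : ∀ t, 0 ≤ t → Integrable (fun x => x ^ 2) (μt t)
  mom : ∀ T : ℝ, 0 < T → ∃ M : ℝ, ∀ t ∈ Set.Icc (0 : ℝ) T, (∫ x, x ^ 2 ∂(μt t)) ≤ M
  sol : ∀ φ : ℝ → ℝ, ContDiff ℝ 2 φ →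
    (∃ M : ℝ, ∀ x, |φ x| + |deriv φ x| + |deriv (deriv φ) x| ≤ M * (1 + x ^ 2)) →
    ∀ t : ℝ, 0 ≤ t →
      ∫ x, φ x ∂(μt t) - ∫ x, φ x ∂(μt 0)
        = ∫ s in (0 : ℝ)..t, ∫ x, L1op (fun y => -y + ε * Bmean (μt s)) φ x ∂(μt s)

/-- Continuous functions of at most quadratic growth. -/
structure HasQuadGrowth (φ : ℝ → ℝ) : Prop where
  cont : Continuous φ
  bound : ∃ M, ∀ x, |φ x| ≤ M * (1 + x ^ 2)

lemma HasQuadGrowth.add {φ ψ : ℝ → ℝ} (hφ : HasQuadGrowth φ) (hψ : HasQuadGrowth ψ) :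
    HasQuadGrowth fun x => φ x + ψ x := by
  obtain ⟨M, hM⟩ := hφ.bound
  obtain ⟨N, hN⟩ := hψ.bound
  refine ⟨hφ.cont.add hψ.cont, M + N, fun x => (abs_add_le _ _).trans ?_⟩
  linarith [hM x, hN x]

lemma HasQuadGrowth.const_mul {φ : ℝ → ℝ} (hφ : HasQuadGrowth φ) (c : ℝ) :
    HasQuadGrowth fun x => c * φ x := by
  obtain ⟨M, hM⟩ := hφ.bound
  refine ⟨continuous_const.mul hφ.cont, |c| * M, fun x => ?_⟩
  rw [abs_mul, mul_assoc]
  exact mul_le_mul_of_nonneg_left (hM x) (abs_nonneg c)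

lemma HasQuadGrowth.congr {φ ψ : ℝ → ℝ} (hφ : HasQuadGrowth φ) (h : ∀ x, ψ x = φ x) :
    HasQuadGrowth ψ := (funext h : ψ = φ) ▸ hφ

/-- `φ` is twice continuously differentiable with derivatives `φ₁`, `φ₂`, all of at most quadratic
growth. -/
structure IsTest (φ φ₁ φ₂ : ℝ → ℝ) : Prop where
  deriv_fst : ∀ x, HasDerivAt φ (φ₁ x) x
  deriv_snd : ∀ x, HasDerivAt φ₁ (φ₂ x) x
  growth : HasQuadGrowth φ
  growth_fst : HasQuadGrowth φ₁
  growth_snd : HasQuadGrowth φ₂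

lemma IsTest.add {φ φ₁ φ₂ ψ ψ₁ ψ₂ : ℝ → ℝ} (hφ : IsTest φ φ₁ φ₂) (hψ : IsTest ψ ψ₁ ψ₂) :
    IsTest (fun x => φ x + ψ x) (fun x => φ₁ x + ψ₁ x) (fun x => φ₂ x + ψ₂ x) :=
  ⟨fun x => (hφ.1 x).add (hψ.1 x), fun x => (hφ.2 x).add (hψ.2 x), hφ.3.add hψ.3,
    hφ.4.add hψ.4, hφ.5.add hψ.5⟩

lemma IsTest.const_mul {φ φ₁ φ₂ : ℝ → ℝ} (hφ : IsTest φ φ₁ φ₂) (c : ℝ) :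
    IsTest (fun x => c * φ x) (fun x => c * φ₁ x) (fun x => c * φ₂ x) :=
  ⟨fun x => (hφ.1 x).const_mul c, fun x => (hφ.2 x).const_mul c, hφ.3.const_mul c,
    hφ.4.const_mul c, hφ.5.const_mul c⟩

lemma IsTest.deriv_eq {φ φ₁ φ₂ : ℝ → ℝ} (hφ : IsTest φ φ₁ φ₂) : deriv φ = φ₁ :=
  funext fun x => (hφ.1 x).deriv

lemma IsTest.deriv_deriv_eq {φ φ₁ φ₂ : ℝ → ℝ} (hφ : IsTest φ φ₁ φ₂) :
    deriv (deriv φ) = φ₂ := by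
  rw [hφ.deriv_eq]; exact funext fun x => (hφ.2 x).deriv

lemma IsTest.contDiff {φ φ₁ φ₂ : ℝ → ℝ} (hφ : IsTest φ φ₁ φ₂) : ContDiff ℝ 2 φ := by
  rw [show (2 : WithTop ℕ∞) = 1 + 1 by norm_num, contDiff_succ_iff_deriv]
  refine ⟨fun x => (hφ.1 x).differentiableAt, by simp, ?_⟩
  rw [contDiff_one_iff_deriv, hφ.deriv_deriv_eq, hφ.deriv_eq]
  exact ⟨fun x => (hφ.2 x).differentiableAt, hφ.5.cont⟩

namespace IsOUSolution

variable {ε : ℝ} {μt : ℝ → Measure ℝ}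

lemma integrable (h : IsOUSolution ε μt) {φ : ℝ → ℝ} (hφ : HasQuadGrowth φ) {t : ℝ}
    (ht : 0 ≤ t) : Integrable φ (μt t) := by
  obtain ⟨M, hM⟩ := hφ.bound
  have := h.prob t ht
  exact (((integrable_const 1).add (h.int t ht)).const_mul M).mono'
    hφ.cont.aestronglyMeasurable (Eventually.of_forall hM)

lemma exists_abs_integral_le (h : IsOUSolution ε μt) {φ : ℝ → ℝ} (hφ : HasQuadGrowth φ) (T : ℝ) :
    ∃ K, ∀ t ∈ Icc 0 T, |∫ x, φ x ∂(μt t)| ≤ K := by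
  obtain ⟨M, hM⟩ := hφ.bound
  obtain ⟨M₂, hM₂⟩ := h.mom (max T 1) (by simp)
  have hM0 : 0 ≤ M := by simpa using (abs_nonneg _).trans (hM 0)
  refine ⟨M * (1 + M₂), fun t ht => ?_⟩
  have := h.prob t ht.1
  have hi := (integrable_const 1).add (h.int t ht.1)
  rw [← Real.norm_eq_abs]
  refine (norm_integral_le_of_norm_le (hi.const_mul M) (Eventually.of_forall hM)).trans ?_
  rw [integral_const_mul]
  refine mul_le_mul_of_nonneg_left ?_ hM0
  simp only [Pi.add_apply]
  rw [integral_add (integrable_const _) (h.int t ht.1)]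
  simpa using hM₂ t ⟨ht.1, ht.2.trans (le_max_left _ _)⟩

lemma sol_isTest (h : IsOUSolution ε μt) {φ φ₁ φ₂ : ℝ → ℝ} (hφ : IsTest φ φ₁ φ₂) {t : ℝ}
    (ht : 0 ≤ t) :
    ∫ x, φ x ∂(μt t) - ∫ x, φ x ∂(μt 0)
      = ∫ s in (0 : ℝ)..t, ∫ x, L1op (fun y => -y + ε * Bmean (μt s)) φ x ∂(μt s) := by
  refine h.sol φ hφ.contDiff ?_ t ht
  rw [hφ.deriv_deriv_eq, hφ.deriv_eq]
  obtain ⟨M, hM⟩ := hφ.growth.bound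
  obtain ⟨M₁, hM₁⟩ := hφ.growth_fst.bound
  obtain ⟨M₂, hM₂⟩ := hφ.growth_snd.bound
  exact ⟨M + M₁ + M₂, fun x => by linarith [hM x, hM₁ x, hM₂ x]⟩

lemma aestronglyMeasurable (h : IsOUSolution ε μt) {φ φ₁ φ₂ : ℝ → ℝ} (hφ : IsTest φ φ₁ φ₂)
    (T : ℝ) :
    AEStronglyMeasurable (fun t => ∫ x, φ x ∂(μt t)) (volume.restrict (Ioc 0 T)) :=
  aestronglyMeasurable_of_eq_primitive (fun _ ht => h.sol_isTest hφ ht) T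

/-- The evolution equation with the generator split into its three moments. -/
lemma sol_moments (h : IsOUSolution ε μt) {φ φ₁ φ₂ : ℝ → ℝ} (hφ : IsTest φ φ₁ φ₂)
    (hx : HasQuadGrowth fun x => x * φ₁ x) {t : ℝ} (ht : 0 ≤ t) :
    ∫ x, φ x ∂(μt t) - ∫ x, φ x ∂(μt 0)
      = ∫ s in (0 : ℝ)..t, (∫ x, φ₂ x ∂(μt s) - ∫ x, x * φ₁ x ∂(μt s)
          + ε * (∫ x, x ∂(μt s)) * ∫ x, φ₁ x ∂(μt s)) := by
  rw [h.sol_isTest hφ ht]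
  refine intervalIntegral.integral_congr fun s hs => ?_
  rw [uIcc_of_le ht] at hs
  have h1 := h.integrable hφ.growth_fst hs.1
  have h2 := h.integrable hφ.growth_snd hs.1
  have h3 := h.integrable hx hs.1
  simp only [L1op, hφ.deriv_deriv_eq]
  rw [hφ.deriv_eq, ← integral_sub h2 h3, ← integral_const_mul (ε * ∫ x, x ∂(μt s)),
    ← integral_add (f := fun x => φ₂ x - x * φ₁ x) (h2.sub h3) (h1.const_mul _)]
  congr 1; ext x; rw [Bmean]; ring

lemma isTest_id : IsTest (fun x => x) (fun _ => 1) (fun _ => 0) := by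
  refine ⟨fun x => hasDerivAt_id x, fun x => hasDerivAt_const x 1, ⟨by fun_prop, 1, fun x => ?_⟩,
    ⟨by fun_prop, 1, fun x => ?_⟩, ⟨by fun_prop, 1, fun x => ?_⟩⟩
  · rw [abs_le]; constructor <;> nlinarith [sq_nonneg (x + 1), sq_nonneg (x - 1)]
  · simp; positivity
  · simp; positivity

/-- The mean decays exponentially with rate `1 - ε`. -/
lemma mean_eq (h : IsOUSolution ε μt) {t : ℝ} (ht : 0 ≤ t) :
    ∫ x, x ∂(μt t) = (∫ x, x ∂(μt 0)) * Real.exp (-(1 - ε) * t) := by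
  set m : ℝ → ℝ := fun t => ∫ x, x ∂(μt t) with hm
  have H : ∀ t, 0 ≤ t → m t - m 0 = ∫ s in (0 : ℝ)..t, -(1 - ε) * m s := fun t ht => by
    have h1 := h.sol_moments isTest_id (isTest_id.growth.congr fun x => mul_one x) ht
    rw [hm]
    simp only
    rw [h1]
    refine intervalIntegral.integral_congr fun s hs => ?_
    rw [uIcc_of_le ht] at hs
    have := h.prob s hs.1
    simp
    ring
  have hc : ContinuousOn m (Ici 0) := by
    refine continuousOn_of_eq_primitive H
      (fun T => (h.aestronglyMeasurable isTest_id T).const_mul _) fun T => ?_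
    obtain ⟨K, hK⟩ := h.exists_abs_integral_le isTest_id.growth T
    refine ⟨|-(1 - ε)| * K, fun s hs => ?_⟩
    rw [abs_mul]
    exact mul_le_mul_of_nonneg_left (hK s hs) (abs_nonneg _)
  have hd : ∀ s, 0 ≤ s → HasDerivWithinAt m (-(1 - ε) * m s) (Ici s) s := fun s hs =>
    (hasDerivWithinAt_of_eq_primitive H (continuousOn_const.mul hc) hs).mono
      (Ici_subset_Ici.2 hs)
  have hconst := constant_of_has_deriv_right_zero
    (f := fun s => Real.exp ((1 - ε) * s) * m s) (a := 0) (b := t)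
    ((by fun_prop : Continuous fun s => Real.exp ((1 - ε) * s)).continuousOn.mul
      (hc.mono Icc_subset_Ici_self)) (fun s hs => by
      have h1 : HasDerivAt (fun s => Real.exp ((1 - ε) * s))
          (Real.exp ((1 - ε) * s) * (1 - ε)) s := by
        simpa using ((hasDerivAt_id s).const_mul (1 - ε)).exp
      convert! h1.hasDerivWithinAt.mul (hd s hs.1) using 1
      ring) t ⟨ht, le_rfl⟩
  simp only [mul_zero, Real.exp_zero, one_mul] at hconst
  have he : Real.exp ((1 - ε) * t) * Real.exp (-(1 - ε) * t) = 1 := by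
    rw [← Real.exp_add]; ring_nf; simp
  calc m t = Real.exp ((1 - ε) * t) * Real.exp (-(1 - ε) * t) * m t := by rw [he, one_mul]
    _ = (Real.exp ((1 - ε) * t) * m t) * Real.exp (-(1 - ε) * t) := by ring
    _ = _ := by rw [hconst]

lemma continuousOn_mean (h : IsOUSolution ε μt) :
    ContinuousOn (fun t => ∫ x, x ∂(μt t)) (Ici 0) :=
  (by fun_prop : Continuous fun t => (∫ x, x ∂(μt 0)) * Real.exp (-(1 - ε) * t)).continuousOn.congr
    fun _ ht => h.mean_eq ht

lemma continuousOn_integral (h : IsOUSolution ε μt) {φ φ₁ φ₂ ψ₁ ψ₂ χ₁ χ₂ ω₁ ω₂ : ℝ → ℝ}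
    (hφ : IsTest φ φ₁ φ₂) (hψ : IsTest φ₁ ψ₁ ψ₂) (hχ : IsTest φ₂ χ₁ χ₂)
    (hω : IsTest (fun x => x * φ₁ x) ω₁ ω₂) :
    ContinuousOn (fun t => ∫ x, φ x ∂(μt t)) (Ici 0) := by
  refine continuousOn_of_eq_primitive (fun _ ht => h.sol_moments hφ hω.growth ht)
    (fun T => ?_) fun T => ?_
  · exact ((h.aestronglyMeasurable hχ T).sub (h.aestronglyMeasurable hω T)).add
      (((h.aestronglyMeasurable isTest_id T).const_mul ε).mul (h.aestronglyMeasurable hψ T))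
  · obtain ⟨K₁, h₁⟩ := h.exists_abs_integral_le hχ.growth T
    obtain ⟨K₂, h₂⟩ := h.exists_abs_integral_le hω.growth T
    obtain ⟨K₃, h₃⟩ := h.exists_abs_integral_le isTest_id.growth T
    obtain ⟨K₄, h₄⟩ := h.exists_abs_integral_le hψ.growth T
    refine ⟨K₁ + K₂ + |ε| * K₃ * K₄, fun s hs => ?_⟩
    refine (abs_add_le _ _).trans (add_le_add ((abs_sub _ _).trans
      (add_le_add (h₁ s hs) (h₂ s hs))) ?_)
    rw [abs_mul, abs_mul]
    have := (abs_nonneg _).trans (h₃ s hs)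
    exact mul_le_mul (mul_le_mul_of_nonneg_left (h₃ s hs) (abs_nonneg _)) (h₄ s hs)
      (abs_nonneg _) (by positivity)

end IsOUSolution

lemma HasDerivWithinAt.zero_of_abs_le {R B : ℝ → ℝ} {S : Set ℝ} {s : ℝ}
    (hB : HasDerivWithinAt B 0 S s) (hRB : ∀ᶠ r in 𝓝[S] s, |R r| ≤ B r) (hR0 : R s = 0)
    (hB0 : B s = 0) : HasDerivWithinAt R 0 S s := by
  rw [hasDerivWithinAt_iff_isLittleO] at hB ⊢
  simp only [hR0, hB0, smul_zero, sub_zero] at hB ⊢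
  refine (Asymptotics.IsBigO.of_bound 1 ?_).trans_isLittleO hB
  filter_upwards [hRB] with r hr
  rw [one_mul]
  exact hr.trans (le_abs_self _)

lemma HasDerivWithinAt.mul_continuousWithinAt {f g : ℝ → ℝ} {f' : ℝ} {S : Set ℝ} {s : ℝ}
    (hf : HasDerivWithinAt f f' S s) (hf0 : f s = 0) (hg : ContinuousWithinAt g S s) :
    HasDerivWithinAt (fun r => f r * g r) (f' * g s) S s := by
  rw [hasDerivWithinAt_iff_tendsto_slope] at hf ⊢
  refine (hf.mul (hg.mono_left (nhdsWithin_mono _ sdiff_subset))).congr fun r => ?_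
  simp only [slope_def_field, hf0]
  ring

lemma abs_sin_sub_self_le (d : ℝ) : |Real.sin d - d| ≤ 2 * d ^ 2 := by
  rw [← sq_abs d]
  have h0 := abs_nonneg d
  rcases le_total |d| 1 with h | h
  · have h1 := Real.sin_bound h
    have h2 : |d ^ 3 / 6| = |d| ^ 3 / 6 := by rw [abs_div, abs_pow]; norm_num
    have h3 : |Real.sin d - d| ≤ |Real.sin d - (d - d ^ 3 / 6)| + |d ^ 3 / 6| := by
      rw [show Real.sin d - d = (Real.sin d - (d - d ^ 3 / 6)) - d ^ 3 / 6 by ring]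
      exact abs_sub _ _
    have h4 : |d| ^ 3 ≤ |d| ^ 2 := pow_le_pow_of_le_one h0 h (by norm_num)
    have h5 : |d| ^ 4 ≤ |d| ^ 2 := pow_le_pow_of_le_one h0 h (by norm_num)
    nlinarith [sq_nonneg |d|]
  · have h1 := (abs_sub (Real.sin d) d).trans (add_le_add_left (Real.abs_sin_le_abs (x := d)) _)
    nlinarith

/-- First-order Taylor expansion of the cosine with a uniform quadratic remainder. -/
lemma abs_cos_add_sub_sub_le (y d : ℝ) :
    |Real.cos (y + d) - Real.cos y - d * Real.cos (y + π / 2)| ≤ 3 * d ^ 2 := by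
  have h1 := abs_sin_sub_self_le d
  have h2 : |Real.cos d - 1| ≤ d ^ 2 := by
    rw [abs_le]
    constructor <;> nlinarith [Real.one_sub_sq_div_two_le_cos (x := d), Real.cos_le_one d,
      sq_nonneg d]
  rw [Real.cos_add_pi_div_two, Real.cos_add, show Real.cos y * Real.cos d -
    Real.sin y * Real.sin d - Real.cos y - d * -Real.sin y
      = Real.cos y * (Real.cos d - 1) - Real.sin y * (Real.sin d - d) by ring]
  refine (abs_sub _ _).trans ?_
  rw [abs_mul, abs_mul]
  have h3 := mul_le_mul (Real.abs_cos_le_one y) h2 (abs_nonneg _) zero_le_one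
  have h4 := mul_le_mul (Real.abs_sin_le_one y) h1 (abs_nonneg _) zero_le_one
  linarith

/-- The trigonometric test function `x ^ j * cos (k x + θ)`. -/
def trigMonomial (j : ℕ) (k θ x : ℝ) : ℝ := x ^ j * Real.cos (k * x + θ)

/-- The derivative of `trigMonomial j k θ`. -/
def trigMonomialDeriv (j : ℕ) (k θ x : ℝ) : ℝ :=
  j * trigMonomial (j - 1) k θ x + k * trigMonomial j k (θ + π / 2) x

lemma hasDerivAt_trigMonomial (j : ℕ) (k θ x : ℝ) :
    HasDerivAt (trigMonomial j k θ) (trigMonomialDeriv j k θ x) x := by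
  have h1 : HasDerivAt (fun x => k * x + θ) k x := by
    simpa using ((hasDerivAt_id x).const_mul k).add_const θ
  convert! (hasDerivAt_pow j x).mul h1.cos using 1
  simp only [trigMonomialDeriv, trigMonomial, ← add_assoc, Real.cos_add_pi_div_two]
  ring

lemma hasQuadGrowth_trigMonomial {j : ℕ} (hj : j ≤ 2) (k θ : ℝ) :
    HasQuadGrowth (trigMonomial j k θ) := by
  refine ⟨by unfold trigMonomial; fun_prop, 1, fun x => ?_⟩
  rw [trigMonomial, abs_mul, abs_pow, one_mul]
  have h1 : |x| ^ j ≤ 1 + x ^ 2 := by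
    rw [← sq_abs x]
    interval_cases j
    · simp [sq_nonneg]
    · nlinarith [sq_nonneg (|x| - 1), abs_nonneg x]
    · linarith
  exact (mul_le_of_le_one_right (by positivity) (Real.abs_cos_le_one _)).trans h1

lemma hasQuadGrowth_trigMonomialDeriv {j : ℕ} (hj : j ≤ 2) (k θ : ℝ) :
    HasQuadGrowth (trigMonomialDeriv j k θ) :=
  ((hasQuadGrowth_trigMonomial (by omega) k θ).const_mul j).add
    ((hasQuadGrowth_trigMonomial hj k (θ + π / 2)).const_mul k)

lemma isTest_trigMonomial {j : ℕ} (hj : j ≤ 2) (k θ : ℝ) :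
    IsTest (trigMonomial j k θ) (trigMonomialDeriv j k θ)
      (fun x => j * trigMonomialDeriv (j - 1) k θ x + k * trigMonomialDeriv j k (θ + π / 2) x) where
  deriv_fst := hasDerivAt_trigMonomial j k θ
  deriv_snd x := ((hasDerivAt_trigMonomial (j - 1) k θ x).const_mul _).add
    ((hasDerivAt_trigMonomial j k (θ + π / 2) x).const_mul _)
  growth := hasQuadGrowth_trigMonomial hj k θ
  growth_fst := hasQuadGrowth_trigMonomialDeriv hj k θ
  growth_snd := ((hasQuadGrowth_trigMonomialDeriv (by omega) k θ).const_mul j).add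
    ((hasQuadGrowth_trigMonomialDeriv hj k (θ + π / 2)).const_mul k)

lemma exists_isTest_trigMonomialDeriv {j : ℕ} (hj : j ≤ 2) (k θ : ℝ) :
    ∃ ψ₁ ψ₂, IsTest (trigMonomialDeriv j k θ) ψ₁ ψ₂ :=
  ⟨_, _, ((isTest_trigMonomial (by omega : j - 1 ≤ 2) k θ).const_mul j).add
    ((isTest_trigMonomial hj k (θ + π / 2)).const_mul k)⟩

lemma mul_trigMonomialDeriv (j : ℕ) (k θ x : ℝ) :
    x * trigMonomialDeriv j k θ x
      = j * trigMonomial j k θ x + k * trigMonomial (j + 1) k (θ + π / 2) x := by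
  cases j <;> simp only [trigMonomialDeriv, trigMonomial, Nat.add_sub_cancel] <;> push_cast <;> ring

namespace IsOUSolution

variable {ε : ℝ} {μt : ℝ → Measure ℝ}

lemma continuousOn_integral_trigMonomial (h : IsOUSolution ε μt) {j : ℕ} (hj : j ≤ 1) (k θ : ℝ) :
    ContinuousOn (fun t => ∫ x, trigMonomial j k θ x ∂(μt t)) (Ici 0) := by
  obtain ⟨_, _, hψ⟩ := exists_isTest_trigMonomialDeriv (by omega : j ≤ 2) k θ
  obtain ⟨_, _, hψ'⟩ := exists_isTest_trigMonomialDeriv (by omega : j ≤ 2) k (θ + π / 2)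
  obtain ⟨_, _, hψ''⟩ := exists_isTest_trigMonomialDeriv (by omega : j - 1 ≤ 2) k θ
  have hω := ((isTest_trigMonomial (by omega : j ≤ 2) k θ).const_mul j).add
    ((isTest_trigMonomial (by omega : j + 1 ≤ 2) k (θ + π / 2)).const_mul k)
  simp only [← mul_trigMonomialDeriv] at hω
  exact h.continuousOn_integral (isTest_trigMonomial (by omega) k θ) hψ
    ((hψ''.const_mul j).add (hψ'.const_mul k)) hω

lemma hasDerivWithinAt_integral_cos (h : IsOUSolution ε μt) (k θ : ℝ) {s : ℝ} (hs : 0 ≤ s) :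
    HasDerivWithinAt (fun t => ∫ x, trigMonomial 0 k θ x ∂(μt t))
      (-k ^ 2 * ∫ x, trigMonomial 0 k θ x ∂(μt s)
        - k * ∫ x, trigMonomial 1 k (θ + π / 2) x ∂(μt s)
        + ε * (∫ x, x ∂(μt s)) * (k * ∫ x, trigMonomial 0 k (θ + π / 2) x ∂(μt s)))
      (Ici 0) s := by
  have e1 : trigMonomialDeriv 0 k θ = fun x => k * trigMonomial 0 k (θ + π / 2) x := by
    ext x; simp [trigMonomialDeriv]
  have e2 : ∀ x, ((0 : ℕ) : ℝ) * trigMonomialDeriv (0 - 1) k θ x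
      + k * trigMonomialDeriv 0 k (θ + π / 2) x = -k ^ 2 * trigMonomial 0 k θ x := fun x => by
    simp [trigMonomialDeriv, trigMonomial, ← add_assoc, Real.cos_add_pi_div_two,
      Real.sin_add_pi_div_two]
    ring
  have e3 : ∀ x, x * (k * trigMonomial 0 k (θ + π / 2) x)
      = k * trigMonomial 1 k (θ + π / 2) x := fun x => by
    simp only [trigMonomial]; ring
  have hT := isTest_trigMonomial (by norm_num : 0 ≤ 2) k θ
  simp only [e2] at hT
  rw [e1] at hT
  refine hasDerivWithinAt_of_eq_primitive (h := fun s => -k ^ 2 * ∫ x, trigMonomial 0 k θ x ∂(μt s)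
        - k * ∫ x, trigMonomial 1 k (θ + π / 2) x ∂(μt s)
        + ε * (∫ x, x ∂(μt s)) * (k * ∫ x, trigMonomial 0 k (θ + π / 2) x ∂(μt s)))
    (fun t ht => ?_) ?_ hs
  · have := h.sol_moments hT
      (((hasQuadGrowth_trigMonomial (by norm_num : 1 ≤ 2) k (θ + π / 2)).const_mul k).congr e3) ht
    simp only [e3, integral_const_mul] at this
    exact this
  · have c0 := fun θ => h.continuousOn_integral_trigMonomial (by norm_num : 0 ≤ 1) k θ
    have c1 := fun θ => h.continuousOn_integral_trigMonomial (by norm_num : 1 ≤ 1) k θ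
    exact ((continuousOn_const.mul (c0 θ)).sub (continuousOn_const.mul (c1 _))).add
      ((continuousOn_const.mul h.continuousOn_mean).mul (continuousOn_const.mul (c0 _)))

/-- Time derivative of the Fourier transform along a moving frequency and phase. -/
lemma hasDerivWithinAt_integral_cos_comp (h : IsOUSolution ε μt) {κ θ : ℝ → ℝ} {κ' θ' s : ℝ}
    (hs : 0 ≤ s) (hκ : HasDerivAt κ κ' s) (hθ : HasDerivAt θ θ' s) :
    HasDerivWithinAt (fun t => ∫ x, trigMonomial 0 (κ t) (θ t) x ∂(μt t))
      (-κ s ^ 2 * ∫ x, trigMonomial 0 (κ s) (θ s) x ∂(μt s)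
        + (κ' - κ s) * ∫ x, trigMonomial 1 (κ s) (θ s + π / 2) x ∂(μt s)
        + (θ' + ε * (∫ x, x ∂(μt s)) * κ s) * ∫ x, trigMonomial 0 (κ s) (θ s + π / 2) x ∂(μt s))
      (Ici 0) s := by
  set A₀ : ℝ → ℝ := fun t => ∫ x, trigMonomial 0 (κ s) (θ s) x ∂(μt t) with hA₀
  set A₁ : ℝ → ℝ := fun t => ∫ x, trigMonomial 1 (κ s) (θ s + π / 2) x ∂(μt t) with hA₁
  set A₂ : ℝ → ℝ := fun t => ∫ x, trigMonomial 0 (κ s) (θ s + π / 2) x ∂(μt t) with hA₂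
  set R : ℝ → ℝ := fun t => ∫ x, trigMonomial 0 (κ t) (θ t) x ∂(μt t) - A₀ t
    - (κ t - κ s) * A₁ t - (θ t - θ s) * A₂ t with hR
  obtain ⟨M, hM⟩ := h.mom (s + 1) (by linarith)
  have hκ0 : HasDerivWithinAt (fun t => κ t - κ s) κ' (Ici 0) s :=
    (hκ.sub_const _).hasDerivWithinAt
  have hθ0 : HasDerivWithinAt (fun t => θ t - θ s) θ' (Ici 0) s :=
    (hθ.sub_const _).hasDerivWithinAt
  have hB : HasDerivWithinAt (fun t => 6 * ((κ t - κ s) ^ 2 * M + (θ t - θ s) ^ 2)) 0 (Ici 0) s := by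
    convert! (((hκ0.pow 2).mul_const M).add (hθ0.pow 2)).const_mul 6 using 1
    simp
  have hRd : HasDerivWithinAt R 0 (Ici 0) s := by
    refine hB.zero_of_abs_le ?_ (by simp [hR, hA₀]) (by simp)
    filter_upwards [self_mem_nhdsWithin,
      mem_nhdsWithin_of_mem_nhds (Iic_mem_nhds (lt_add_one s))] with t ht ht1
    have ht0 : (0 : ℝ) ≤ t := ht
    have := h.prob t ht0
    have i0 := fun k θ => h.integrable (hasQuadGrowth_trigMonomial (by norm_num : 0 ≤ 2) k θ) ht0
    have i1 := fun k θ => h.integrable (hasQuadGrowth_trigMonomial (by norm_num : 1 ≤ 2) k θ) ht0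
    have hRt : R t = ∫ x, (trigMonomial 0 (κ t) (θ t) x - trigMonomial 0 (κ s) (θ s) x
        - (κ t - κ s) * trigMonomial 1 (κ s) (θ s + π / 2) x
        - (θ t - θ s) * trigMonomial 0 (κ s) (θ s + π / 2) x) ∂(μt t) := by
      have i2 : Integrable (fun x => trigMonomial 0 (κ t) (θ t) x
          - trigMonomial 0 (κ s) (θ s) x) (μt t) := (i0 _ _).sub (i0 _ _)
      have i3 : Integrable (fun x => trigMonomial 0 (κ t) (θ t) x - trigMonomial 0 (κ s) (θ s) x
          - (κ t - κ s) * trigMonomial 1 (κ s) (θ s + π / 2) x) (μt t) :=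
        i2.sub ((i1 _ _).const_mul _)
      rw [integral_sub i3 ((i0 _ _).const_mul _), integral_sub i2 ((i1 _ _).const_mul _),
        integral_sub (i0 _ _) (i0 _ _), integral_const_mul, integral_const_mul]
    have hdom : Integrable (fun x => 6 * ((κ t - κ s) ^ 2 * x ^ 2 + (θ t - θ s) ^ 2)) (μt t) :=
      (((h.int t ht0).const_mul _).add (integrable_const _)).const_mul _
    rw [hRt, ← Real.norm_eq_abs]
    refine (norm_integral_le_of_norm_le hdom (Eventually.of_forall fun x => ?_)).trans ?_
    · have h1 := abs_cos_add_sub_sub_le (κ s * x + θ s) ((κ t - κ s) * x + (θ t - θ s))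
      rw [Real.norm_eq_abs]
      simp only [trigMonomial]
      rw [show κ s * x + θ s + ((κ t - κ s) * x + (θ t - θ s)) = κ t * x + θ t by ring] at h1
      calc _ = _ := by congr 1; rw [← add_assoc]; ring
        _ ≤ _ := h1
        _ ≤ _ := by nlinarith [sq_nonneg ((κ t - κ s) * x - (θ t - θ s))]
    · rw [integral_const_mul, integral_add ((h.int t ht0).const_mul _) (integrable_const _),
        integral_const_mul]
      simp only [integral_const, probReal_univ, one_smul]
      have := hM t ⟨ht0, ht1⟩
      gcongr
  have hc1 : ContinuousWithinAt A₁ (Ici 0) s :=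
    h.continuousOn_integral_trigMonomial (by norm_num) _ _ s hs
  have hc2 : ContinuousWithinAt A₂ (Ici 0) s :=
    h.continuousOn_integral_trigMonomial (by norm_num) _ _ s hs
  have hsum := (((h.hasDerivWithinAt_integral_cos (κ s) (θ s) hs).add
    (hκ0.mul_continuousWithinAt (by simp) hc1)).add
    (hθ0.mul_continuousWithinAt (by simp) hc2)).add hRd
  convert! hsum using 1
  · ext t
    simp only [hR, hA₀, Pi.add_apply]
    ring
  · ring

/-- The Fourier transform of the solution along the characteristics. -/
lemma integral_cos_characteristic (h : IsOUSolution ε μt) (k θ : ℝ) {T : ℝ} (hT : 0 ≤ T) :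
    Real.exp (k ^ 2 * (Real.exp (2 * T) - 1) / 2)
        * ∫ x, trigMonomial 0 (k * Real.exp T)
            (θ - k * (∫ x, x ∂(μt 0)) * (Real.exp (ε * T) - 1)) x ∂(μt T)
      = ∫ x, trigMonomial 0 k θ x ∂(μt 0) := by
  set m₀ := ∫ x, x ∂(μt 0) with hm₀
  have hd : ∀ s, 0 ≤ s → HasDerivWithinAt (fun s => Real.exp (k ^ 2 * (Real.exp (2 * s) - 1) / 2)
        * ∫ x, trigMonomial 0 (k * Real.exp s)
            (θ - k * m₀ * (Real.exp (ε * s) - 1)) x ∂(μt s)) 0 (Ici 0) s := fun s hs => by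
    have hκ : HasDerivAt (fun s => k * Real.exp s) (k * Real.exp s) s :=
      (Real.hasDerivAt_exp s).const_mul k
    have hθ : HasDerivAt (fun s => θ - k * m₀ * (Real.exp (ε * s) - 1))
        (-(k * m₀ * (Real.exp (ε * s) * ε))) s := by
      have h1 : HasDerivAt (fun s => Real.exp (ε * s)) (Real.exp (ε * s) * ε) s := by
        simpa using ((hasDerivAt_id s).const_mul ε).exp
      exact ((h1.sub_const 1).const_mul (k * m₀)).const_sub θ
    have ha : HasDerivAt (fun s => Real.exp (k ^ 2 * (Real.exp (2 * s) - 1) / 2))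
        (Real.exp (k ^ 2 * (Real.exp (2 * s) - 1) / 2) * (k ^ 2 * Real.exp (2 * s))) s := by
      have h1 : HasDerivAt (fun s => Real.exp (2 * s)) (Real.exp (2 * s) * 2) s := by
        simpa using ((hasDerivAt_id s).const_mul 2).exp
      convert! (((h1.sub_const 1).const_mul (k ^ 2)).div_const 2).exp using 1
      ring
    have hF := h.hasDerivWithinAt_integral_cos_comp hs hκ hθ
    convert! ha.hasDerivWithinAt.mul hF using 1
    have hm : (∫ x, x ∂(μt s)) * Real.exp s = m₀ * Real.exp (ε * s) := by
      rw [h.mean_eq hs, ← hm₀, mul_assoc, ← Real.exp_add]; ring_nf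
    have he : Real.exp (2 * s) = Real.exp s ^ 2 := by
      rw [← Real.exp_nat_mul]; norm_num
    have hz : -(k * m₀ * (Real.exp (ε * s) * ε)) + ε * (∫ x, x ∂(μt s)) * (k * Real.exp s) = 0 := by
      linear_combination k * ε * hm
    rw [hz, sub_self, he]
    ring
  have := constant_of_has_deriv_right_zero (a := 0) (b := T)
    (fun s hs => ((hd s hs.1).continuousWithinAt).mono Icc_subset_Ici_self)
    (fun s hs => (hd s hs.1).mono (Ici_subset_Ici.2 hs.1)) T ⟨hT, le_rfl⟩
  simpa using this

end IsOUSolution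

lemma integral_cexp_affine (P : Measure ℝ) [IsProbabilityMeasure P] (k θ : ℝ) :
    ∫ x, Complex.exp ((k * x + θ : ℝ) * Complex.I) ∂P
      = (∫ x, trigMonomial 0 k θ x ∂P : ℝ)
        + (∫ x, trigMonomial 0 k (θ - π / 2) x ∂P : ℝ) * Complex.I := by
  have hi : ∀ θ, Integrable (trigMonomial 0 k θ) P := fun θ =>
    Integrable.of_bound (hasQuadGrowth_trigMonomial (by norm_num) k θ).cont.aestronglyMeasurable 1
      (Eventually.of_forall fun x => by
        simpa [trigMonomial] using Real.abs_cos_le_one (k * x + θ))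
  have hc : ∀ θ, Integrable (fun x => (trigMonomial 0 k θ x : ℂ)) P := fun θ => (hi θ).ofReal
  rw [← integral_complex_ofReal, ← integral_complex_ofReal, ← integral_mul_const,
    ← integral_add (hc _) ((hc _).mul_const _)]
  congr 1
  ext x
  rw [Complex.exp_mul_I, ← Complex.ofReal_cos, ← Complex.ofReal_sin]
  simp only [trigMonomial, ← add_sub_assoc, Real.cos_sub_pi_div_two]
  simp

/-- The solution is the law of an affine image of the initial condition plus an independent
Gaussian variable. -/
lemma IsOUSolution.eq_conv {ε : ℝ} {μt : ℝ → Measure ℝ} (h : IsOUSolution ε μt) {T : ℝ}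
    (hT : 0 ≤ T) {v : ℝ≥0} (hv : (v : ℝ) = 1 - Real.exp (-T) ^ 2) :
    μt T = ((μt 0).map (fun x => Real.exp (-T) * x
      + (∫ x, x ∂(μt 0)) * (Real.exp (-(1 - ε) * T) - Real.exp (-T)))) ∗ gaussianReal 0 v := by
  set m₀ := ∫ x, x ∂(μt 0)
  set a := Real.exp (-T) with ha
  set c := m₀ * (Real.exp (-(1 - ε) * T) - a) with hc
  have := h.prob T hT
  have := h.prob 0 le_rfl
  have : IsProbabilityMeasure ((μt 0).map (fun x => a * x + c)) :=
    Measure.isProbabilityMeasure_map (by fun_prop)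
  have haT : a * Real.exp T = 1 := by rw [ha, ← Real.exp_add]; simp
  have hkey : ∀ k θ : ℝ, ∫ x, trigMonomial 0 k θ x ∂(μt T)
      = Real.exp (-(v * k ^ 2 / 2)) * ∫ x, trigMonomial 0 (k * a) (k * c + θ) x ∂(μt 0) := by
    intro k θ
    have h1 := h.integral_cos_characteristic (k * a) (k * c + θ) hT
    have h2 : k * a * Real.exp T = k := by rw [mul_assoc, haT, mul_one]
    have h3 : a * Real.exp (ε * T) = Real.exp (-(1 - ε) * T) := by
      rw [ha, ← Real.exp_add]; ring_nf
    have h4 : k * c + θ - k * a * m₀ * (Real.exp (ε * T) - 1) = θ := by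
      rw [hc, ← h3]; ring
    have h5 : (k * a) ^ 2 * (Real.exp (2 * T) - 1) / 2 = v * k ^ 2 / 2 := by
      have : Real.exp (2 * T) = Real.exp T ^ 2 := by rw [← Real.exp_nat_mul]; norm_num
      rw [this, hv]
      linear_combination k ^ 2 / 2 * (a * Real.exp T + 1) * haT
    rw [h2, h4, h5] at h1
    rw [← h1, ← mul_assoc, ← Real.exp_add]
    simp
  refine Measure.ext_of_charFun (funext fun k => ?_)
  rw [charFun_conv, charFun_gaussianReal, charFun_apply_real, charFun_apply_real,
    integral_map (by fun_prop) (by fun_prop)]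
  have e1 := integral_cexp_affine (μt T) k 0
  have e2 := integral_cexp_affine (μt 0) (k * a) (k * c)
  have e3 : ∀ x : ℝ, (k : ℂ) * (x : ℂ) * Complex.I = (k * x + 0 : ℝ) * Complex.I := fun x => by
    push_cast; ring
  have e4 : ∀ x : ℝ, (k : ℂ) * ((a * x + c : ℝ) : ℂ) * Complex.I
      = (k * a * x + k * c : ℝ) * Complex.I := fun x => by
    push_cast; ring
  simp only [e4]
  simp only [e3]
  rw [e1, e2, hkey, hkey]
  have e5 : Complex.exp ((k * (0 : ℝ) + 0 : ℝ) * Complex.I - v * k ^ 2 / 2)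
      = (Real.exp (-(v * k ^ 2 / 2)) : ℝ) := by
    push_cast; simp
  rw [e5]
  simp only [add_zero, sub_eq_add_neg]
  push_cast
  ring_nf

lemma gaussianReal_eq_conv {a : ℝ} {v : ℝ≥0} (hv : (v : ℝ) = 1 - a ^ 2) :
    gaussianReal 0 1
      = ((gaussianReal 0 1).map (fun x => a * x + 0)) ∗ gaussianReal 0 v := by
  simp only [add_zero]
  rw [gaussianReal_map_const_mul, gaussianReal_conv_gaussianReal]
  congr 1
  · simp
  · ext; simp [hv]

lemma integrable_sq_gaussianReal : Integrable (fun x : ℝ => x ^ 2) (gaussianReal 0 1) := by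
  simpa using (memLp_id_gaussianReal (μ := 0) (v := 1) 2).integrable_sq

/-- **Exponential convergence for the mean-field Ornstein–Uhlenbeck model with
`ε ∈ [0,1)`**: solutions of `∂_tμ_t = (μ_t)'' + ((x - εB(μ_t))μ_t)'` converge
exponentially, in total variation with weight `(1+x²)^{1/2}`, to the standard
Gaussian measure. -/
theorem stmt13_OU_convergence
    (ε : ℝ) (hε0 : 0 ≤ ε) (hε1 : ε < 1)
    (ν : Measure ℝ) (hν : IsProbabilityMeasure ν)
    (hν2 : Integrable (fun x => x ^ 2) ν)
    (μt : ℝ → Measure ℝ)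
    (hμt0 : μt 0 = ν)
    (hμtProb : ∀ t, 0 ≤ t → IsProbabilityMeasure (μt t))
    (hμtInt : ∀ t, 0 ≤ t → Integrable (fun x => x ^ 2) (μt t))
    (hμtMom : ∀ T : ℝ, 0 < T → ∃ M : ℝ, ∀ t ∈ Set.Icc (0:ℝ) T,
      (∫ x, x ^ 2 ∂(μt t)) ≤ M)
    -- the defining identity, valid for every `φ ∈ C²(ℝ)` with
    -- `(|φ| + |φ'| + |φ''|)/(1+x²)` bounded
    (hμtSol : ∀ φ : ℝ → ℝ, ContDiff ℝ 2 φ →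
      (∃ M : ℝ, ∀ x, |φ x| + |deriv φ x| + |deriv (deriv φ) x| ≤ M * (1 + x ^ 2)) →
      ∀ t : ℝ, 0 ≤ t →
        ∫ x, φ x ∂(μt t) - ∫ x, φ x ∂ν
          = ∫ s in (0:ℝ)..t,
              ∫ x, L1op (fun y => -y + ε * Bmean (μt s)) φ x ∂(μt s)) :
    ∃ α₁ > (0:ℝ), ∃ α₂ > (0:ℝ), ∀ t : ℝ, 0 ≤ t →
      wDist1 (fun x => Real.sqrt (1 + x ^ 2)) (μt t) (gaussianReal 0 1)
        ≤ α₁ * Real.exp (-α₂ * t) := by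
  set γ := gaussianReal 0 1 with hγ
  have hsol : IsOUSolution ε μt := ⟨hμtProb, hμtInt, hμtMom, by rw [hμt0]; exact hμtSol⟩
  obtain ⟨C, hC, hCf⟩ := exists_abs_integral_conv_gaussianReal_sub_le
  set m₀ := ∫ x, x ∂(μt 0) with hm₀
  set δ := 1 - ε with hδ
  have hδ0 : 0 < δ := by linarith
  set t₀ := max 1 (Real.log (1 + |m₀|) / δ) with ht₀
  obtain ⟨M, hM⟩ := hμtMom t₀ (lt_of_lt_of_le one_pos (le_max_left _ _))
  set N := ∫ x, x ^ 2 ∂(μt 0) with hN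
  set G := ∫ x, x ^ 2 ∂γ with hG
  have hN0 : 0 ≤ N := integral_nonneg fun x => sq_nonneg x
  have hG0 : 0 ≤ G := integral_nonneg fun x => sq_nonneg x
  have hM0 : 0 ≤ M := hN0.trans (hM 0 ⟨le_rfl, zero_le_one.trans (le_max_left _ _)⟩)
  have hγ2 : Integrable (fun x : ℝ => x ^ 2) γ := integrable_sq_gaussianReal
  have hquad : ∀ x : ℝ, 1 + |x| ≤ 2 + x ^ 2 := fun x => by
    nlinarith [sq_abs x, sq_nonneg (|x| - 1), abs_nonneg x]
  refine ⟨(4 + M + G) * Real.exp (δ * t₀) + C * (2 + N + G) * (1 + |m₀|), by positivity, δ, hδ0,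
    fun t ht => Real.iSup_le (fun f => ?_) (by positivity)⟩
  obtain ⟨f, hfm, hfW⟩ := f
  simp only
  have hfb : ∀ u, |f u| ≤ 1 + |u| := fun u =>
    (hfW u).trans (Real.sqrt_le_iff.2 ⟨by positivity, by nlinarith [sq_abs u, abs_nonneg u]⟩)
  have hintegrable : ∀ (P : Measure ℝ) [IsProbabilityMeasure P], Integrable (fun x : ℝ => x ^ 2) P →
      Integrable f P ∧ |∫ x, f x ∂P| ≤ 2 + ∫ x, x ^ 2 ∂P := fun P _ hP => by
    have hd : Integrable (fun x : ℝ => 2 + x ^ 2) P := (integrable_const _).add hP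
    have hb : ∀ᵐ x ∂P, ‖f x‖ ≤ 2 + x ^ 2 :=
      Eventually.of_forall fun x => (hfb x).trans (hquad x)
    refine ⟨hd.mono' hfm.aestronglyMeasurable hb, ?_⟩
    refine (norm_integral_le_of_norm_le hd hb).trans_eq ?_
    rw [integral_add (integrable_const _) hP]
    simp
  have := hμtProb t ht
  have := hμtProb 0 le_rfl
  obtain ⟨hfμ, hfμb⟩ := hintegrable (μt t) (hμtInt t ht)
  obtain ⟨hfγ, hfγb⟩ := hintegrable γ hγ2
  refine (le_abs_self _).trans ?_
  have he0 : 0 < Real.exp (-δ * t) := Real.exp_pos _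
  rcases le_total t t₀ with htt | htt
  · have h1 : 1 ≤ Real.exp (δ * t₀) * Real.exp (-δ * t) := by
      rw [← Real.exp_add]; exact Real.one_le_exp (by nlinarith)
    have h2 := hM t ⟨ht, htt⟩
    calc _ ≤ 4 + M + G := (abs_sub _ _).trans (by linarith)
      _ ≤ (4 + M + G) * (Real.exp (δ * t₀) * Real.exp (-δ * t)) :=
        le_mul_of_one_le_right (by positivity) h1
      _ ≤ _ := by
        have h3 : 0 ≤ C * (2 + N + G) * (1 + |m₀|) * Real.exp (-δ * t) := by positivity
        linarith
  · have ht1 : 1 ≤ t := (le_max_left _ _).trans htt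
    have hexp : Real.exp (-t) ≤ Real.exp (-δ * t) := Real.exp_le_exp.2 (by nlinarith)
    have ha1 : Real.exp (-t) ≤ 1 / 2 := by
      have h1 : 2 ≤ Real.exp t := by linarith [Real.add_one_le_exp t]
      rw [Real.exp_neg, one_div]
      exact inv_anti₀ two_pos h1
    have ha0 := Real.exp_pos (-t)
    have hv0 : 0 ≤ 1 - Real.exp (-t) ^ 2 := by nlinarith
    obtain ⟨v, hv⟩ : ∃ v : ℝ≥0, (v : ℝ) = 1 - Real.exp (-t) ^ 2 := ⟨⟨_, hv0⟩, rfl⟩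
    set r := (1 + |m₀|) * Real.exp (-δ * t) with hr
    have hr1 : r ≤ 1 := by
      have h1 : Real.log (1 + |m₀|) ≤ t * δ := (div_le_iff₀ hδ0).1 ((le_max_right _ _).trans htt)
      rw [hr, ← Real.exp_log (by positivity : 0 < 1 + |m₀|), ← Real.exp_add]
      exact Real.exp_le_one_iff.2 (by linarith)
    have har : |Real.exp (-t)| ≤ r := by
      rw [abs_of_pos ha0]
      exact hexp.trans (le_mul_of_one_le_left he0.le (by simp))
    have hcr : |m₀ * (Real.exp (-δ * t) - Real.exp (-t))| ≤ r := by
      rw [abs_mul, abs_of_nonneg (sub_nonneg.2 hexp)]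
      nlinarith [abs_nonneg m₀, mul_nonneg (abs_nonneg m₀) ha0.le]
    have hv4 : 1 / 4 ≤ (v : ℝ) := by rw [hv]; nlinarith
    have hv1 : (v : ℝ) ≤ 1 := by rw [hv]; nlinarith
    have hμ := hsol.eq_conv ht hv
    have hγc := gaussianReal_eq_conv hv
    have b1 := hCf (μt 0) (hμtInt 0 le_rfl) _ _ r v hv4 hv1 hr1 har hcr f hfm hfb
      (by rw [← hμ]; exact hfμ)
    have b2 := hCf γ hγ2 _ 0 r v hv4 hv1 hr1 har (by simpa using (abs_nonneg _).trans har) f hfm hfb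
      (by rw [← hγc]; exact hfγ)
    rw [← hμ] at b1
    rw [← hγc] at b2
    rw [abs_sub_comm] at b2
    refine (abs_sub_le _ _ _).trans ((add_le_add b1 b2).trans ?_)
    have h3 : 0 ≤ (4 + M + G) * Real.exp (δ * t₀) * Real.exp (-δ * t) := by positivity
    rw [hr]
    linarith
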